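/- Let χᵢ be primitive Dirichlet characters mod rᵢ for i = 1,2,3,4, let r = lcm(r₁,r₂,r₃,r₄), and let χ₀ be the principal character mod q. Then Σ_{q ≤ P, r | q} |Z(q, χ₀χ₁, χ₀χ₂, χ₀χ₃, χ₀χ₄)| / φ(q)⁴ ≪ r^{−1+ε} (log P)^c for some absolute constant c > 0 and any ε > 0. -/

import Mathlib

open Classical

noncomputable def eC (t : ℝ) : ℂ := Complex.exp (2 * Real.pi * Complex.I * t)

/-- `C_k(h, ψ)` for a Dirichlet character `ψ` mod `q`. -/
noncomputable def CkChar (q : ℕ) (ψ : DirichletCharacter ℂ q) (k h : ℕ) : ℂ :=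
  ∑ l ∈ Finset.Icc 1 q, ψ (l : ZMod q) * eC ((h : ℝ) * (l : ℝ) ^ k / q)

noncomputable def Zchar (q : ℕ) (N : ℤ) (ψ₂ ψ₃ ψ₄ ψ₅ : DirichletCharacter ℂ q) : ℂ :=
  ∑ h ∈ (Finset.Icc 1 q).filter (fun h => Nat.Coprime h q),
    eC (-(N : ℝ) * h / q) *
      (CkChar q ψ₂ 2 h * CkChar q ψ₃ 3 h * CkChar q ψ₄ 4 h * CkChar q ψ₅ 5 h)

/-- The number of solutions of `u ^ k = 1` among the units modulo `q`. -/
noncomputable def unitTorsionCard (k q : ℕ) : ℕ := Nat.card {u : (ZMod q)ˣ // u ^ k = 1}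

theorem natCard_pow_eq_one_le_mul_index {G : Type*} [CommGroup G] [Finite G] (H : Subgroup G)
    [IsCyclic H] {k : ℕ} (hk : 0 < k) :
    Nat.card {x : G // x ^ k = 1} ≤ H.index * k := by
  have := Fintype.ofFinite G
  have hH : (Finset.univ.filter fun x : H => x ^ k = 1).card ≤ k :=
    IsCyclic.card_pow_eq_one_le hk
  rw [Nat.card_eq_fintype_card, Fintype.card_subtype]
  have key := Finset.card_le_mul_card_image (f := fun x : G => (x : G ⧸ H))
    (Finset.univ.filter fun x : G => x ^ k = 1) k ?_
  · refine key.trans ?_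
    rw [mul_comm]
    refine Nat.mul_le_mul_right _ ?_
    rw [Subgroup.index, Nat.card_eq_fintype_card]
    exact Finset.card_le_univ _
  · intro c hc
    obtain ⟨y, hy, rfl⟩ := Finset.mem_image.1 hc
    refine le_trans ?_ hH
    have hmem : ∀ x ∈ (Finset.univ.filter fun x : G => x ^ k = 1).filter
        (fun x : G => (x : G ⧸ H) = y), y⁻¹ * x ∈ H := by
      intro x hx
      exact QuotientGroup.eq.1 (Finset.mem_filter.1 hx).2.symm
    refine Finset.card_le_card_of_injOn
      (fun x => if hx : y⁻¹ * x ∈ H then ⟨y⁻¹ * x, hx⟩ else 1) ?_ ?_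
    · intro x hx
      have h1 := hmem x hx
      have h2 : x ^ k = 1 := by simpa using (Finset.mem_filter.1 (Finset.mem_filter.1 hx).1).2
      have h3 : y ^ k = 1 := by simpa using hy
      simp only [h1, dite_true, Finset.coe_filter, Finset.mem_univ, true_and, Set.mem_ofPred_eq]
      ext
      simp [mul_pow, h2, h3]
    · intro x hx z hz hxz
      simpa [hmem x hx, hmem z hz] using hxz

theorem unitTorsionCard_prime_pow_le {p : ℕ} (hp : p.Prime) (n : ℕ) {k : ℕ} (hk : 0 < k) :
    unitTorsionCard k (p ^ n) ≤ 2 * k := by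
  have : NeZero (p ^ n) := ⟨pow_ne_zero _ hp.ne_zero⟩
  have top : IsCyclic (ZMod (p ^ n))ˣ → unitTorsionCard k (p ^ n) ≤ 2 * k := by
    intro _
    have := natCard_pow_eq_one_le_mul_index (⊤ : Subgroup (ZMod (p ^ n))ˣ) hk
    rw [Subgroup.index_top] at this
    unfold unitTorsionCard
    linarith
  by_cases h2 : p = 2
  · subst h2
    by_cases hn : n ≤ 2
    · exact top ((ZMod.isCyclic_units_two_pow_iff n).2 hn)
    obtain ⟨m, rfl⟩ : ∃ m, n = m + 2 := ⟨n - 2, by omega⟩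
    have hu : IsUnit (5 : ZMod (2 ^ (m + 2))) := by
      have : ((5 : ℕ) : ZMod (2 ^ (m + 2))) = 5 := by norm_num
      rw [← this, ZMod.isUnit_iff_coprime]
      exact Nat.Coprime.pow_right _ (by norm_num)
    have ho : orderOf hu.unit = 2 ^ m := by
      rw [← orderOf_injective _ Units.coeHom_injective hu.unit, Units.coeHom_apply,
        IsUnit.unit_spec]
      exact ZMod.orderOf_five m
    have := natCard_pow_eq_one_le_mul_index (Subgroup.zpowers hu.unit) hk
    have hi : (Subgroup.zpowers hu.unit).index = 2 := by
      have h := (Subgroup.zpowers hu.unit).card_mul_index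
      rw [Nat.card_zpowers, ho, Nat.card_eq_fintype_card, ZMod.card_units_eq_totient,
        Nat.totient_prime_pow_succ hp] at h
      have : 0 < 2 ^ m := by positivity
      refine Nat.eq_of_mul_eq_mul_left this (h.trans ?_)
      ring
    rwa [hi] at this
  · exact top (ZMod.isCyclic_units_of_prime_pow p hp h2 n)

theorem unitTorsionCard_mul {m n : ℕ} (h : m.Coprime n) (k : ℕ) :
    unitTorsionCard k (m * n) = unitTorsionCard k m * unitTorsionCard k n := by
  unfold unitTorsionCard
  rw [← Nat.card_prod]
  let e : (ZMod (m * n))ˣ ≃* (ZMod m)ˣ × (ZMod n)ˣ :=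
    (Units.mapEquiv (ZMod.chineseRemainder h).toMulEquiv).trans MulEquiv.prodUnits
  refine Nat.card_congr ((e.toEquiv.subtypeEquiv (q := fun x => x.1 ^ k = 1 ∧ x.2 ^ k = 1)
    fun u => ?_).trans (Equiv.subtypeProdEquivProd (p := fun x : (ZMod m)ˣ => x ^ k = 1)
      (q := fun x : (ZMod n)ˣ => x ^ k = 1)))
  rw [← e.map_eq_one_iff, map_pow, Prod.ext_iff]
  rfl

theorem unitTorsionCard_le_card_divisors_pow {k : ℕ} (hk : 0 < k) (hk' : k ≤ 5) {q : ℕ}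
    (hq : q ≠ 0) : unitTorsionCard k q ≤ q.divisors.card ^ 4 := by
  induction q using Nat.recOnPosPrimePosCoprime with
  | prime_pow p n hp hn =>
    refine (unitTorsionCard_prime_pow_le hp n hk).trans ?_
    rw [Nat.divisors_prime_pow hp, Finset.card_map, Finset.card_range]
    calc 2 * k ≤ 2 ^ 4 := by omega
      _ ≤ (n + 1) ^ 4 := by gcongr; omega
  | zero => exact absurd rfl hq
  | one => exact (Finite.card_subtype_le _).trans (by simp)
  | coprime a b ha hb hab iha ihb =>
    rw [unitTorsionCard_mul hab, hab.card_divisors_mul, mul_pow]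
    exact Nat.mul_le_mul (iha (by omega)) (ihb (by omega))

theorem le_totient_mul_card_divisors (q : ℕ) : q ≤ q.totient * q.divisors.card := by
  induction q using Nat.recOnPosPrimePosCoprime with
  | prime_pow p n hp hn =>
    rw [Nat.divisors_prime_pow hp, Finset.card_map, Finset.card_range, Nat.totient_prime_pow hp hn]
    obtain ⟨m, rfl⟩ : ∃ m, n = m + 1 := ⟨n - 1, by omega⟩
    obtain ⟨s, rfl⟩ : ∃ s, p = s + 2 := ⟨p - 2, by have := hp.two_le; omega⟩
    simp only [Nat.add_sub_cancel, Nat.add_succ_sub_one]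
    rw [pow_succ, mul_assoc]
    refine Nat.mul_le_mul_left _ ?_
    nlinarith
  | zero => simp
  | one => simp
  | coprime a b ha hb hab iha ihb =>
    rw [hab.card_divisors_mul, Nat.totient_mul hab]
    calc a * b ≤ _ := Nat.mul_le_mul iha ihb
      _ = _ := by ring

theorem card_divisors_mul_le (m n : ℕ) :
    (m * n).divisors.card ≤ m.divisors.card * n.divisors.card := by
  rw [Nat.divisors_mul]
  exact Finset.card_mul_le

theorem card_divisors_pow_mul_div_le (m r t : ℕ) :
    ((r * t).divisors.card : ℝ) ^ m / (r * t : ℕ) ≤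
      ((r.divisors.card : ℝ) ^ m / r) * ((t.divisors.card : ℝ) ^ m / t) := by
  rw [div_mul_div_comm, ← mul_pow, Nat.cast_mul]
  refine div_le_div_of_nonneg_right (pow_le_pow_left₀ (Nat.cast_nonneg _) ?_ _) (by positivity)
  rw [← Nat.cast_mul]
  exact Nat.cast_le.2 (card_divisors_mul_le r t)

theorem sum_sum_divisorsAntidiagonal_le_sq (n : ℕ) {f : ℕ → ℝ} (hf : ∀ a, 0 ≤ f a) :
    ∑ t ∈ Finset.Icc 1 n, ∑ x ∈ t.divisorsAntidiagonal, f x.1 * f x.2 ≤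
      (∑ t ∈ Finset.Icc 1 n, f t) ^ 2 := by
  rw [sq, Finset.sum_mul_sum, ← Finset.sum_product', ← Finset.sum_biUnion]
  · refine Finset.sum_le_sum_of_subset_of_nonneg ?_ fun x _ _ => mul_nonneg (hf _) (hf _)
    rintro ⟨a, b⟩ hx
    simp only [Finset.mem_biUnion, Finset.mem_Icc, Nat.mem_divisorsAntidiagonal] at hx
    obtain ⟨_, ⟨h1, h2⟩, rfl, h3⟩ := hx
    have ha : 0 < a := Nat.pos_of_ne_zero fun h => h3 (by simp [h])
    have hb : 0 < b := Nat.pos_of_ne_zero fun h => h3 (by simp [h])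
    simp only [Finset.mem_product, Finset.mem_Icc]
    refine ⟨⟨ha, ?_⟩, hb, ?_⟩ <;> nlinarith
  · intro s _ t _ hst
    refine Finset.disjoint_left.2 fun x hx hx' => hst ?_
    rw [← (Nat.mem_divisorsAntidiagonal.1 hx).1, (Nat.mem_divisorsAntidiagonal.1 hx').1]

theorem sum_card_divisors_pow_div_le (n m : ℕ) :
    ∑ t ∈ Finset.Icc 1 n, (t.divisors.card : ℝ) ^ m / t ≤ (1 + Real.log n) ^ 2 ^ m := by
  induction m with
  | zero =>
    have h := harmonic_le_one_add_log n
    rw [harmonic_eq_sum_Icc] at h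
    push_cast at h
    simpa using h
  | succ m ih =>
    calc ∑ t ∈ Finset.Icc 1 n, (t.divisors.card : ℝ) ^ (m + 1) / t
        = ∑ t ∈ Finset.Icc 1 n,
            ∑ x ∈ t.divisorsAntidiagonal, (t.divisors.card : ℝ) ^ m / t := by
          refine Finset.sum_congr rfl fun t _ => ?_
          rw [Finset.sum_const, ← Nat.map_div_right_divisors, Finset.card_map, nsmul_eq_mul]
          ring
      _ ≤ ∑ t ∈ Finset.Icc 1 n, ∑ x ∈ t.divisorsAntidiagonal,
            ((x.1.divisors.card : ℝ) ^ m / x.1) * ((x.2.divisors.card : ℝ) ^ m / x.2) := by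
          refine Finset.sum_le_sum fun t _ => Finset.sum_le_sum fun x hx => ?_
          obtain ⟨rfl, -⟩ := Nat.mem_divisorsAntidiagonal.1 hx
          exact card_divisors_pow_mul_div_le m x.1 x.2
      _ ≤ (∑ t ∈ Finset.Icc 1 n, (t.divisors.card : ℝ) ^ m / t) ^ 2 :=
          sum_sum_divisorsAntidiagonal_le_sq n (f := fun t => (t.divisors.card : ℝ) ^ m / t)
            fun a => div_nonneg (pow_nonneg (Nat.cast_nonneg _) _) (Nat.cast_nonneg _)
      _ ≤ ((1 + Real.log n) ^ 2 ^ m) ^ 2 :=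
          pow_le_pow_left₀ (Finset.sum_nonneg fun a _ =>
            div_nonneg (pow_nonneg (Nat.cast_nonneg _) _) (Nat.cast_nonneg _)) ih 2
      _ = _ := by rw [← pow_mul, pow_succ]

theorem exists_card_divisors_pow_le_rpow (m : ℕ) {ε : ℝ} (hε : 0 < ε) :
    ∃ C : ℝ, 0 < C ∧ ∀ n : ℕ, 0 < n → (n.divisors.card : ℝ) ^ m ≤ C * (n : ℝ) ^ ε := by
  obtain ⟨M, hM⟩ := exists_nat_gt (2 * m / ε)
  have hM0 : (0 : ℝ) < M := lt_of_le_of_lt (by positivity) hM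
  have hM' : M ≠ 0 := by rintro rfl; simp at hM0
  set K : ℕ := 2 ^ M with hK
  have hKpos : (0 : ℝ) < K := by rw [hK]; positivity
  -- `1 + log n ≤ (1 + 1 / δ) n ^ δ`, with `δ = 1 / K`
  have hlog : ∀ n : ℕ, 0 < n → (1 + Real.log n) ^ K ≤ (1 + K) ^ K * (n : ℝ) := by
    intro n hn
    have hn1 : (1 : ℝ) ≤ n := by exact_mod_cast hn
    have h1 : Real.log n ≤ (n : ℝ) ^ (1 / K : ℝ) / (1 / K) :=
      Real.log_le_rpow_div (by positivity) (by positivity)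
    have h2 : (1 : ℝ) ≤ (n : ℝ) ^ (1 / K : ℝ) := Real.one_le_rpow hn1 (by positivity)
    have h3 : 1 + Real.log n ≤ (1 + K) * (n : ℝ) ^ (1 / K : ℝ) := by
      rw [div_div_eq_mul_div, div_one] at h1
      linarith
    calc (1 + Real.log n) ^ K ≤ ((1 + K) * (n : ℝ) ^ (1 / K : ℝ)) ^ K := by
          have := Real.log_nonneg hn1
          gcongr
      _ = (1 + K) ^ K * (n : ℝ) := by
          rw [mul_pow, ← Real.rpow_mul_natCast (by positivity), one_div,
            inv_mul_cancel₀ hKpos.ne', Real.rpow_one]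
  refine ⟨((1 + K : ℝ) ^ K) ^ (m / M : ℝ), by positivity, fun n hn => ?_⟩
  have hn1 : (1 : ℝ) ≤ n := by exact_mod_cast hn
  have h1 : (n.divisors.card : ℝ) ^ M ≤ (1 + K) ^ K * (n : ℝ) ^ (2 : ℝ) := by
    have hs := (Finset.single_le_sum (f := fun t : ℕ => (t.divisors.card : ℝ) ^ M / t)
      (fun _ _ => by positivity) (Finset.mem_Icc.2 ⟨hn, le_refl n⟩)).trans
      ((sum_card_divisors_pow_div_le n M).trans (hlog n hn))
    rw [div_le_iff₀ (by positivity)] at hs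
    rw [Real.rpow_two]
    linarith
  calc (n.divisors.card : ℝ) ^ m = ((n.divisors.card : ℝ) ^ M) ^ (m / M : ℝ) := by
        rw [← Real.rpow_natCast, ← Real.rpow_natCast, ← Real.rpow_mul (by positivity),
          mul_div_cancel₀ _ hM0.ne']
    _ ≤ ((1 + K) ^ K * (n : ℝ) ^ (2 : ℝ)) ^ (m / M : ℝ) := by gcongr
    _ = ((1 + K : ℝ) ^ K) ^ (m / M : ℝ) * (n : ℝ) ^ (2 * (m / M) : ℝ) := by
        rw [Real.mul_rpow (by positivity) (by positivity), ← Real.rpow_mul (by positivity)]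
    _ ≤ _ := by
        gcongr
        rw [← mul_div_assoc, div_le_iff₀ hM0]
        rw [div_lt_iff₀ hε] at hM
        linarith

/-- The sum `∑ ψ(u) e(h u ^ k / q)` over the units modulo `q`. -/
noncomputable def unitCharSum {q : ℕ} [NeZero q] (ψ : DirichletCharacter ℂ q) (k : ℕ)
    (h : ZMod q) : ℂ :=
  ∑ u : (ZMod q)ˣ, ψ u * ZMod.stdAddChar (h * (u : ZMod q) ^ k)

theorem sum_Icc_natCast_zmod {M : Type*} [AddCommMonoid M] (q : ℕ) [NeZero q] (f : ZMod q → M) :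
    ∑ l ∈ Finset.Icc 1 q, f l = ∑ x : ZMod q, f x := by
  have hq := NeZero.pos q
  have hinj : Set.InjOn (fun l : ℕ => (l : ZMod q)) (Finset.Icc 1 q) := by
    intro a ha b hb hab
    have h := (ZMod.natCast_eq_natCast_iff _ _ _).1 hab
    wlog hle : a ≤ b generalizing a b
    · exact (this hb ha hab.symm h.symm (le_of_not_ge hle)).symm
    have hd := (Nat.modEq_iff_dvd' hle).1 h
    simp only [Finset.coe_Icc, Set.mem_Icc] at ha hb
    have := Nat.eq_zero_of_dvd_of_lt hd (by omega)
    omega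
  rw [← Finset.sum_image (g := fun l : ℕ => (l : ZMod q)) (f := f) hinj]
  congr 1
  refine Finset.eq_univ_of_card _ ?_
  rw [Finset.card_image_of_injOn hinj, Nat.card_Icc, ZMod.card]
  omega

theorem CkChar_eq_unitCharSum {q : ℕ} [NeZero q] (ψ : DirichletCharacter ℂ q) (k h : ℕ) :
    CkChar q ψ k h = unitCharSum ψ k (h : ZMod q) := by
  have h1 : CkChar q ψ k h = ∑ x : ZMod q, ψ x * ZMod.stdAddChar ((h : ZMod q) * x ^ k) := by
    rw [← sum_Icc_natCast_zmod]
    refine Finset.sum_congr rfl fun l _ => ?_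
    have := ZMod.stdAddChar_coe (N := q) ((h * l ^ k : ℕ) : ℤ)
    push_cast at this
    rw [this, eC]
    push_cast
    congr 2
    ring
  rw [h1, unitCharSum]
  symm
  refine Finset.sum_of_injOn (fun u : (ZMod q)ˣ => (u : ZMod q))
    (fun _ _ _ _ h => Units.ext h) (fun _ _ => Finset.mem_coe.2 (Finset.mem_univ _)) ?_
    (fun _ _ => rfl)
  intro x _ hx
  rw [MulChar.map_nonunit, zero_mul]
  rintro ⟨u, rfl⟩
  exact hx ⟨u, by simp⟩

theorem norm_unitCharSum_mul_pow {q : ℕ} [NeZero q] (ψ : DirichletCharacter ℂ q) (k : ℕ)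
    (h : ZMod q) (a : (ZMod q)ˣ) :
    ‖unitCharSum ψ k (h * (a : ZMod q) ^ k)‖ = ‖unitCharSum ψ k h‖ := by
  have : unitCharSum ψ k h = ψ a * unitCharSum ψ k (h * (a : ZMod q) ^ k) := by
    rw [unitCharSum, unitCharSum, Finset.mul_sum, ← Equiv.sum_comp (Equiv.mulLeft a)]
    refine Finset.sum_congr rfl fun u _ => ?_
    rw [Equiv.coe_mulLeft, Units.val_mul, map_mul, mul_pow]
    ring_nf
  rw [this, norm_mul, ψ.unit_norm_eq_one, one_mul]

theorem card_filter_pow_eq_pow {q : ℕ} [NeZero q] (k : ℕ) (u : (ZMod q)ˣ) :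
    (Finset.univ.filter fun v : (ZMod q)ˣ => v ^ k = u ^ k).card = unitTorsionCard k q := by
  rw [unitTorsionCard, Nat.card_eq_fintype_card, Fintype.card_subtype]
  refine Finset.card_bij (fun v _ => v * u⁻¹) ?_ ?_ ?_
  · intro v hv
    simp_all [mul_pow]
  · intro v _ w _ h
    exact mul_right_cancel h
  · intro w hw
    refine ⟨w * u, ?_, by simp⟩
    simp_all [mul_pow]

theorem sum_norm_sq_unitCharSum_le {q : ℕ} [NeZero q] (ψ : DirichletCharacter ℂ q) (k : ℕ) :
    ∑ h : ZMod q, ‖unitCharSum ψ k h‖ ^ 2 ≤ q * (q.totient * unitTorsionCard k q) := by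
  have key : ((∑ h : ZMod q, ‖unitCharSum ψ k h‖ ^ 2 : ℝ) : ℂ) =
      ∑ u : (ZMod q)ˣ, ∑ v : (ZMod q)ˣ,
        if v ^ k = u ^ k then (q : ℂ) * (ψ u * starRingEnd ℂ (ψ v)) else 0 := by
    push_cast
    have : ∀ h : ZMod q, ((‖unitCharSum ψ k h‖ : ℂ)) ^ 2 = ∑ u : (ZMod q)ˣ, ∑ v : (ZMod q)ˣ,
        ψ u * starRingEnd ℂ (ψ v) *
          ZMod.stdAddChar (h * ((u : ZMod q) ^ k - (v : ZMod q) ^ k)) := by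
      intro h
      rw [← Complex.mul_conj', unitCharSum, map_sum, Finset.sum_mul_sum]
      refine Finset.sum_congr rfl fun u _ => Finset.sum_congr rfl fun v _ => ?_
      rw [map_mul (starRingEnd ℂ), ← AddChar.map_neg_eq_conj, mul_sub, sub_eq_add_neg, AddChar.map_add_eq_mul]
      ring
    simp_rw [this]
    rw [Finset.sum_comm]
    refine Finset.sum_congr rfl fun u _ => ?_
    rw [Finset.sum_comm]
    refine Finset.sum_congr rfl fun v _ => ?_
    rw [← Finset.mul_sum, AddChar.sum_mulShift _ (ZMod.isPrimitive_stdAddChar q), ZMod.card]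
    have : ((u : ZMod q) ^ k - (v : ZMod q) ^ k = 0) ↔ v ^ k = u ^ k := by
      rw [sub_eq_zero, Units.ext_iff, Units.val_pow_eq_pow_val, Units.val_pow_eq_pow_val, eq_comm]
    simp only [this]
    split_ifs <;> simp [mul_comm]
  have hnn : 0 ≤ ∑ h : ZMod q, ‖unitCharSum ψ k h‖ ^ 2 := by positivity
  calc ∑ h : ZMod q, ‖unitCharSum ψ k h‖ ^ 2
      = ‖((∑ h : ZMod q, ‖unitCharSum ψ k h‖ ^ 2 : ℝ) : ℂ)‖ := by
        rw [Complex.norm_real, Real.norm_of_nonneg hnn]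
    _ ≤ ∑ u : (ZMod q)ˣ, ∑ v : (ZMod q)ˣ, if v ^ k = u ^ k then (q : ℝ) else 0 := by
        rw [key]
        refine (norm_sum_le _ _).trans (Finset.sum_le_sum fun u _ => ?_)
        refine (norm_sum_le _ _).trans (Finset.sum_le_sum fun v _ => ?_)
        split_ifs
        · simp [ψ.unit_norm_eq_one]
        · simp
    _ = q * (q.totient * unitTorsionCard k q) := by
        simp_rw [← Finset.sum_filter, Finset.sum_const, card_filter_pow_eq_pow, nsmul_eq_mul]
        rw [Finset.sum_const, Finset.card_univ, ZMod.card_units_eq_totient, nsmul_eq_mul]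
        ring

theorem norm_unitCharSum_le {q : ℕ} [NeZero q] (ψ : DirichletCharacter ℂ q) (k : ℕ)
    {h : ZMod q} (hh : IsUnit h) :
    ‖unitCharSum ψ k h‖ ≤ Real.sqrt q * unitTorsionCard k q := by
  have hφ : (0 : ℝ) < q.totient := by exact_mod_cast Nat.totient_pos.2 (NeZero.pos q)
  have h1 : (q.totient : ℝ) * ‖unitCharSum ψ k h‖ ^ 2 ≤
      unitTorsionCard k q * ∑ x : ZMod q, ‖unitCharSum ψ k x‖ ^ 2 := by
    calc (q.totient : ℝ) * ‖unitCharSum ψ k h‖ ^ 2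
        = ∑ a : (ZMod q)ˣ, ‖unitCharSum ψ k (h * (a : ZMod q) ^ k)‖ ^ 2 := by
          simp [norm_unitCharSum_mul_pow, ZMod.card_units_eq_totient]
      _ = ∑ x : ZMod q, ∑ a ∈ Finset.univ.filter (fun a : (ZMod q)ˣ => h * (a : ZMod q) ^ k = x),
            ‖unitCharSum ψ k (h * (a : ZMod q) ^ k)‖ ^ 2 := by
          rw [Finset.sum_fiberwise]
      _ ≤ ∑ x : ZMod q, unitTorsionCard k q * ‖unitCharSum ψ k x‖ ^ 2 := by
          refine Finset.sum_le_sum fun x _ => ?_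
          rw [Finset.sum_congr rfl (g := fun _ => ‖unitCharSum ψ k x‖ ^ 2)
            (fun a ha => by rw [(Finset.mem_filter.1 ha).2]), Finset.sum_const, nsmul_eq_mul]
          gcongr
          rcases (Finset.univ.filter
            fun a : (ZMod q)ˣ => h * (a : ZMod q) ^ k = x).eq_empty_or_nonempty with he | ⟨b, hb⟩
          · simp [he]
          · rw [← card_filter_pow_eq_pow k b]
            refine Finset.card_le_card fun a ha => ?_
            simp only [Finset.mem_filter, Finset.mem_univ, true_and] at ha hb ⊢
            have := hh.mul_left_cancel (ha.trans hb.symm)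
            exact Units.ext (by simpa using this)
      _ = _ := by rw [Finset.mul_sum]
  have h2 : ‖unitCharSum ψ k h‖ ^ 2 ≤ q * (unitTorsionCard k q : ℝ) ^ 2 := by
    have h3 := sum_norm_sq_unitCharSum_le ψ k
    refine le_of_mul_le_mul_left (h1.trans ((mul_le_mul_of_nonneg_left h3
      (Nat.cast_nonneg _)).trans_eq ?_)) hφ
    ring
  refine le_of_sq_le_sq ?_ (by positivity)
  rwa [mul_pow, Real.sq_sqrt (by positivity)]

theorem norm_CkChar_le {q h k : ℕ} (hq : 0 < q) (hk : 0 < k) (hk' : k ≤ 5)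
    (ψ : DirichletCharacter ℂ q) (hh : h.Coprime q) :
    ‖CkChar q ψ k h‖ ≤ Real.sqrt q * (q.divisors.card : ℝ) ^ 4 := by
  have : NeZero q := ⟨hq.ne'⟩
  rw [CkChar_eq_unitCharSum]
  refine (norm_unitCharSum_le ψ k ((ZMod.isUnit_iff_coprime h q).2 hh)).trans ?_
  gcongr
  exact_mod_cast unitTorsionCard_le_card_divisors_pow hk hk' hq.ne'

theorem norm_eC (t : ℝ) : ‖eC t‖ = 1 := by
  have : eC t = Complex.exp ((2 * Real.pi * t : ℝ) * Complex.I) := by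
    rw [eC]; push_cast; ring_nf
  rw [this, Complex.norm_exp_ofReal_mul_I]

theorem norm_Zchar_le {q : ℕ} (hq : 0 < q) (N : ℤ) (ψ₂ ψ₃ ψ₄ ψ₅ : DirichletCharacter ℂ q) :
    ‖Zchar q N ψ₂ ψ₃ ψ₄ ψ₅‖ ≤ q.totient * ((q : ℝ) ^ 2 * (q.divisors.card : ℝ) ^ 16) := by
  have hcard : ((Finset.Icc 1 q).filter fun h => Nat.Coprime h q).card = q.totient := by
    rw [← Nat.filter_coprime_Ico_eq_totient q 1, add_comm 1 q, Finset.Ico_add_one_right_eq_Icc]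
    simp only [Nat.coprime_comm]
  refine (norm_sum_le_of_le _ (n := fun _ => (q : ℝ) ^ 2 * (q.divisors.card : ℝ) ^ 16)
    fun h hh => ?_).trans_eq (by rw [Finset.sum_const, hcard, nsmul_eq_mul])
  have hc := (Finset.mem_filter.1 hh).2
  rw [norm_mul, norm_eC, one_mul, norm_mul, norm_mul, norm_mul]
  set B := Real.sqrt q * (q.divisors.card : ℝ) ^ 4 with hB
  calc _ ≤ B * B * B * B := by
        gcongr <;> exact norm_CkChar_le hq (by norm_num) (by norm_num) _ hc
    _ = (Real.sqrt q ^ 2) ^ 2 * (q.divisors.card : ℝ) ^ 16 := by rw [hB]; ring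
    _ = _ := by rw [Real.sq_sqrt (Nat.cast_nonneg q)]

theorem norm_Zchar_div_totient_pow_le {q : ℕ} (hq : 0 < q) (N : ℤ)
    (ψ₂ ψ₃ ψ₄ ψ₅ : DirichletCharacter ℂ q) :
    ‖Zchar q N ψ₂ ψ₃ ψ₄ ψ₅‖ / (q.totient : ℝ) ^ 4 ≤ (q.divisors.card : ℝ) ^ 19 / q := by
  have hφ : (0 : ℝ) < q.totient := by exact_mod_cast Nat.totient_pos.2 hq
  have hq' : (0 : ℝ) < q := by exact_mod_cast hq
  have hle : (q : ℝ) ≤ q.totient * q.divisors.card := by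
    exact_mod_cast le_totient_mul_card_divisors q
  rw [div_le_div_iff₀ (by positivity) hq']
  calc ‖Zchar q N ψ₂ ψ₃ ψ₄ ψ₅‖ * q
      ≤ q.totient * ((q : ℝ) ^ 2 * (q.divisors.card : ℝ) ^ 16) * q := by
        gcongr; exact norm_Zchar_le hq N ψ₂ ψ₃ ψ₄ ψ₅
    _ = q.totient * (q.divisors.card : ℝ) ^ 16 * (q : ℝ) ^ 3 := by ring
    _ ≤ q.totient * (q.divisors.card : ℝ) ^ 16 * (q.totient * q.divisors.card) ^ 3 := by gcongr
    _ = _ := by ring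

theorem one_add_log_floor_le {P : ℝ} (hP : 2 ≤ P) : 1 + Real.log ⌊P⌋₊ ≤ 3 * Real.log P := by
  have h2 := Real.log_two_gt_d9
  have h3 : Real.log 2 ≤ Real.log P := Real.log_le_log (by norm_num) hP
  have h1 : (1 : ℝ) ≤ ⌊P⌋₊ := by exact_mod_cast (Nat.one_le_floor_iff P).2 (by linarith)
  have h4 : Real.log ⌊P⌋₊ ≤ Real.log P :=
    Real.log_le_log (by linarith) (Nat.floor_le (by linarith))
  linarith

/-- Averaged bound for `Z` over levels `q ≤ P` divisible by `r = lcm(r₁,r₂,r₃,r₄)`: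
`Σ_{q ≤ P, r ∣ q} |Z(q, χ₀χ₁, χ₀χ₂, χ₀χ₃, χ₀χ₄)|/φ(q)⁴ ≪ r^{-1+ε} (log P)^c`. -/
theorem Z_average_bound :
    ∃ c : ℝ, 0 < c ∧ ∀ ε : ℝ, 0 < ε → ∃ C : ℝ, 0 < C ∧
      ∀ (N : ℤ) (r₁ r₂ r₃ r₄ : ℕ), 0 < r₁ → 0 < r₂ → 0 < r₃ → 0 < r₄ →
      ∀ (χ₁ : DirichletCharacter ℂ r₁) (χ₂ : DirichletCharacter ℂ r₂)
        (χ₃ : DirichletCharacter ℂ r₃) (χ₄ : DirichletCharacter ℂ r₄),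
      χ₁.IsPrimitive → χ₂.IsPrimitive → χ₃.IsPrimitive → χ₄.IsPrimitive →
      ∀ P : ℝ, 2 ≤ P →
      (∑ t ∈ (Finset.Icc 1 ⌊P⌋₊).filter
          (fun t => Nat.lcm (Nat.lcm r₁ r₂) (Nat.lcm r₃ r₄) * t ≤ ⌊P⌋₊),
        ‖Zchar (Nat.lcm (Nat.lcm r₁ r₂) (Nat.lcm r₃ r₄) * t) N
            (DirichletCharacter.changeLevel
              (((Nat.dvd_lcm_left r₁ r₂).trans (Nat.dvd_lcm_left _ _)).trans
                (dvd_mul_right _ t)) χ₁)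
            (DirichletCharacter.changeLevel
              (((Nat.dvd_lcm_right r₁ r₂).trans (Nat.dvd_lcm_left _ _)).trans
                (dvd_mul_right _ t)) χ₂)
            (DirichletCharacter.changeLevel
              (((Nat.dvd_lcm_left r₃ r₄).trans (Nat.dvd_lcm_right _ _)).trans
                (dvd_mul_right _ t)) χ₃)
            (DirichletCharacter.changeLevel
              (((Nat.dvd_lcm_right r₃ r₄).trans (Nat.dvd_lcm_right _ _)).trans
                (dvd_mul_right _ t)) χ₄)‖ /
          (Nat.totient (Nat.lcm (Nat.lcm r₁ r₂) (Nat.lcm r₃ r₄) * t) : ℝ) ^ 4)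
        ≤ C * (Nat.lcm (Nat.lcm r₁ r₂) (Nat.lcm r₃ r₄) : ℝ) ^ (-1 + ε) *
            Real.log P ^ c := by
  obtain ⟨K, hK, hsum⟩ : ∃ K : ℕ, 0 < K ∧ ∀ n : ℕ,
      ∑ t ∈ Finset.Icc 1 n, (t.divisors.card : ℝ) ^ 19 / t ≤ (1 + Real.log n) ^ K :=
    ⟨2 ^ 19, by positivity, fun n => sum_card_divisors_pow_div_le n 19⟩
  refine ⟨K, by exact_mod_cast hK, fun ε hε => ?_⟩
  obtain ⟨C, hC, hdiv⟩ := exists_card_divisors_pow_le_rpow 19 hε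
  refine ⟨C * 3 ^ K, by positivity, ?_⟩
  intro N r₁ r₂ r₃ r₄ h₁ h₂ h₃ h₄ χ₁ χ₂ χ₃ χ₄ _ _ _ _ P hP
  set r := Nat.lcm (Nat.lcm r₁ r₂) (Nat.lcm r₃ r₄) with hr
  have hr0 : 0 < r := Nat.lcm_pos (Nat.lcm_pos h₁ h₂) (Nat.lcm_pos h₃ h₄)
  have hr' : (0 : ℝ) < r := by exact_mod_cast hr0
  have hlog : 0 ≤ Real.log P := Real.log_nonneg (by linarith)
  calc _ ≤ ∑ t ∈ (Finset.Icc 1 ⌊P⌋₊).filter (fun t => r * t ≤ ⌊P⌋₊),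
        ((r.divisors.card : ℝ) ^ 19 / r) * ((t.divisors.card : ℝ) ^ 19 / t) := by
        refine Finset.sum_le_sum fun t ht => ?_
        have ht0 : 0 < t := (Finset.mem_Icc.1 (Finset.mem_filter.1 ht).1).1
        exact (norm_Zchar_div_totient_pow_le (Nat.mul_pos hr0 ht0) N _ _ _ _).trans
          (card_divisors_pow_mul_div_le 19 r t)
    _ ≤ ∑ t ∈ Finset.Icc 1 ⌊P⌋₊,
        ((r.divisors.card : ℝ) ^ 19 / r) * ((t.divisors.card : ℝ) ^ 19 / t) :=
        Finset.sum_le_sum_of_subset_of_nonneg (Finset.filter_subset _ _)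
          fun _ _ _ => by positivity
    _ = ((r.divisors.card : ℝ) ^ 19 / r) *
        ∑ t ∈ Finset.Icc 1 ⌊P⌋₊, (t.divisors.card : ℝ) ^ 19 / t := by rw [Finset.mul_sum]
    _ ≤ (C * (r : ℝ) ^ ε / r) * (3 * Real.log P) ^ K := by
        refine mul_le_mul (div_le_div_of_nonneg_right (hdiv r hr0) hr'.le)
          ((hsum _).trans (pow_le_pow_left₀ ?_ (one_add_log_floor_le hP) K))
          (Finset.sum_nonneg fun t _ => ?_) (by positivity)
        · have := Real.log_natCast_nonneg ⌊P⌋₊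
          linarith
        · exact div_nonneg (pow_nonneg (Nat.cast_nonneg _) _) (Nat.cast_nonneg _)
    _ = C * 3 ^ K * (r : ℝ) ^ (-1 + ε) * Real.log P ^ (K : ℝ) := by
        rw [Real.rpow_natCast, Real.rpow_add hr', Real.rpow_neg_one, mul_pow]
        ring
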